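/- Let p = 3 and q = p^m where m ≥ 6 is an even integer. Then the number of 6-tuples (x,y,z,w,u,v) ∈ F_q⁶ satisfying x²+y²+z²+w²+u²+v² = 0, x⁴+y⁴+z⁴+w⁴+u⁴+v⁴ = 0, and x^{10}+y^{10}+z^{10}+w^{10}+u^{10}+v^{10} = 0 equals n_{1,0} + n_{−1,0} + p⁶(n_{1,2}+n_{−1,2}) + p^{12}(n_{1,4}+n_{−1,4}) − p³(n_{1,1}+n_{−1,1}) − p⁹(n_{1,3}+n_{−1,3}) + p^{3m}. -/

import Mathlib

open Complex Finset

noncomputable def zetaPow (p : ℕ) (a : ZMod p) : ℂ :=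
  Complex.exp (2 * Real.pi * Complex.I * (a.val : ℂ) / (p : ℂ))

noncomputable def expSum (p m : ℕ) [Fact p.Prime]
    (α β γ : GaloisField p m) : ℂ :=
  letI : Fintype (GaloisField p m) := Fintype.ofFinite _
  ∑ x : GaloisField p m,
    zetaPow p ((Algebra.trace (ZMod p) (GaloisField p m))
      (α * x ^ 2 + β * x ^ (p + 1) + γ * x ^ (p ^ 2 + 1)))

noncomputable def nval (p m : ℕ) (ε : ℤ) (j : ℕ) : ℂ :=
  if j % 2 = 0 then (ε : ℂ) * ((Real.sqrt ((p : ℝ) ^ (m + j)) : ℝ) : ℂ)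
  else (ε : ℂ) * Complex.I * ((Real.sqrt ((p : ℝ) ^ (m + j)) : ℝ) : ℂ)

noncomputable def nn (p m : ℕ) [Fact p.Prime] (ε : ℤ) (j : ℕ) : ℕ :=
  {t : GaloisField p m × GaloisField p m × GaloisField p m |
    t ≠ (0, 0, 0) ∧ expSum p m t.1 t.2.1 t.2.2 = nval p m ε j}.ncard

/-!
By orthogonality of characters, the solutions of the system are counted by the sixth moment of the
sums `S(α, β, γ)`. Each of these is a character sum over the values of a quadratic form in `x`, and
the *square* of such a sum is `(χ₄(p) p) ^ (m + r)`, where `r` is the dimension of the radical; so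
the sixth powers are known without resolving the sign of the sum. For `(α, β, γ) ≠ 0` the radical
consists of roots of a nonzero polynomial of degree at most `p ^ 4`, hence `r ≤ 4`. If `p % 4 = 3`
and `m` is even, the two square roots of `(-p) ^ (m + r)` are the values that define `n_{1,r}` and
`n_{-1,r}`.
-/

lemma addChar_map_sum {A M ι : Type*} [AddCommMonoid A] [CommMonoid M]
    (ψ : AddChar A M) (s : Finset ι) (f : ι → A) : ψ (∑ i ∈ s, f i) = ∏ i ∈ s, ψ (f i) :=
  map_prod ψ.toMonoidHom (fun i => Multiplicative.ofAdd (f i)) s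

section QuadraticFormSums

lemma sum_addChar_weightedSumSquares {A R ι : Type*} [CommRing A] [Fintype A] [CommRing R]
    [Fintype ι] [DecidableEq ι] (ψ : AddChar A R) (w : ι → A) :
    ∑ v, ψ (QuadraticMap.weightedSumSquares A w v) = ∏ i, ∑ x, ψ (w i * x ^ 2) := by
  simp [Fintype.prod_sum, addChar_map_sum, pow_two]

/-- The integer `χ₄(q) * q`, where `q` is the number of elements of the field `K`: for `q` odd, the
square of the quadratic Gauss sum of a nontrivial additive character of `K`. -/
def signedCard (K : Type*) [Fintype K] : ℤ :=
  ZMod.χ₄ (Fintype.card K) * Fintype.card K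

variable {K R : Type*} [Field K] [Fintype K] [CommRing R] [IsDomain R] {ψ : AddChar K R}

lemma sum_addChar_sq_eq_gaussSum [DecidableEq K] (hK : ringChar K ≠ 2) (hψ : ψ ≠ 1) :
    ∑ x, ψ (x ^ 2) = gaussSum ((quadraticChar K).ringHomComp (Int.castRingHom R)) ψ := by
  have hfiber (b : K) : (#{x : K | x ^ 2 = b} : R) = (quadraticChar K b : R) + 1 := by
    have h := quadraticChar_card_sqrts hK b
    rw [Set.toFinset_ofPred] at h
    exact_mod_cast congrArg (Int.cast : ℤ → R) h
  calc ∑ x, ψ (x ^ 2) = ∑ b, ∑ x with x ^ 2 = b, ψ (x ^ 2) := (sum_fiberwise _ _ _).symm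
    _ = ∑ b, ((quadraticChar K b : R) + 1) * ψ b := by
      refine sum_congr rfl fun b _ => ?_
      rw [sum_congr rfl fun x hx => by rw [(mem_filter.mp hx).2], sum_const, nsmul_eq_mul, hfiber]
    _ = _ := by simp [add_mul, sum_add_distrib, AddChar.sum_eq_zero_of_ne_one hψ, gaussSum]

lemma sq_sum_addChar_sq (hK : ringChar K ≠ 2) (hR : ringChar R ≠ 2) (hψ : ψ ≠ 1) :
    (∑ x, ψ (x ^ 2)) ^ 2 = signedCard K := by
  classical
  have hχ : (quadraticChar K).ringHomComp (Int.castRingHom R) ≠ 1 := by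
    obtain ⟨a, ha⟩ := quadraticChar_exists_neg_one' hK
    refine MulChar.ne_one_iff.mpr ⟨a, ?_⟩
    simpa [ha] using Ring.neg_one_ne_one_of_char_ne_two hR
  rw [sum_addChar_sq_eq_gaussSum hK hψ, gaussSum_sq hχ ((quadraticChar_isQuadratic K).comp _)
    (.of_ne_one hψ), MulChar.ringHomComp_apply, quadraticChar_neg_one hK]
  simp [signedCard]

lemma signedCard_sq (hK : ringChar K ≠ 2) : signedCard K ^ 2 = (Fintype.card K : ℤ) ^ 2 := by
  classical
  rw [signedCard, ← quadraticChar_neg_one hK, mul_pow,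
    quadraticChar_sq_one (neg_ne_zero.mpr one_ne_zero), one_mul]

lemma natAbs_signedCard (hK : ringChar K ≠ 2) : (signedCard K).natAbs = Fintype.card K := by
  simpa using Int.natAbs_eq_iff_sq_eq.mpr (signedCard_sq hK)

lemma sq_sum_addChar_weightedSumSquares {ι : Type*} [Fintype ι] [DecidableEq ι] [DecidableEq K]
    (hK : ringChar K ≠ 2) (hR : ringChar R ≠ 2) (hψ : ψ.IsPrimitive) (w : ι → K) :
    (∑ v, ψ (QuadraticMap.weightedSumSquares K w v)) ^ 2 =
      (signedCard K : R) ^ (Fintype.card ι + #{i | w i = 0}) := by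
  have hfactor (i : ι) : (∑ x, ψ (w i * x ^ 2)) ^ 2 =
      (signedCard K : R) * if w i = 0 then (signedCard K : R) else 1 := by
    split_ifs with hw
    · simpa [hw, pow_two] using congrArg (Int.cast : ℤ → R) (signedCard_sq hK).symm
    · simpa using sq_sum_addChar_sq hK hR (hψ hw)
  rw [sum_addChar_weightedSumSquares, ← prod_pow, prod_congr rfl fun i _ => hfactor i,
    prod_mul_distrib, ← prod_filter, prod_const, prod_const, card_univ, pow_add]

theorem sq_sum_addChar_quadraticForm {V : Type*} [AddCommGroup V] [Module K V] [Fintype V]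
    (hK : ringChar K ≠ 2) (hR : ringChar R ≠ 2) (hψ : ψ.IsPrimitive) (Q : QuadraticForm K V) :
    (∑ v, ψ (Q v)) ^ 2 =
      (signedCard K : R) ^ (Module.finrank K V + Module.finrank K Q.radical) := by
  classical
  have : NeZero (2 : K) := ⟨Ring.two_ne_zero hK⟩
  have : Invertible (2 : K) := invertibleOfNonzero two_ne_zero
  obtain ⟨w, hw⟩ := Q.equivalent_weightedSumSquares
  rw [QuadraticForm.finrank_radical_of_equiv_weightedSumSquares hw]
  obtain ⟨e⟩ := hw
  calc (∑ v, ψ (Q v)) ^ 2 = (∑ v, ψ (QuadraticMap.weightedSumSquares K w v)) ^ 2 := by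
        simp only [← e.toEquiv.sum_comp fun v => ψ (QuadraticMap.weightedSumSquares K w v)]
        congr! 3 with v
        exact (e.map_app v).symm
    _ = _ := by
      rw [sq_sum_addChar_weightedSumSquares hK hR hψ, Fintype.card_fin, ← Set.ncard_coe_finset]
      simp

end QuadraticFormSums

section Moments

variable {A R : Type*} [CommRing A] [Fintype A] [CommRing R] [IsDomain R] {ψ : AddChar A R}

lemma sum_addChar_dotProduct {ι : Type*} [Fintype ι] [DecidableEq ι] [DecidableEq A]
    (hψ : ψ.IsPrimitive) (b : ι → A) :
    ∑ a : ι → A, ψ (∑ i, a i * b i) =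
      if b = 0 then (Fintype.card A : R) ^ Fintype.card ι else 0 := by
  simp_rw [addChar_map_sum, ← Fintype.prod_sum fun i x => ψ (x * b i),
    AddChar.sum_mulShift _ hψ, Nat.cast_ite, Nat.cast_zero]
  rw [prod_ite_zero]
  simp [funext_iff]

lemma sum_pow_sum_addChar {ι X : Type*} [Fintype ι] [DecidableEq ι] [Fintype X]
    (hψ : ψ.IsPrimitive) (f : ι → X → A) (n : ℕ) :
    ∑ a : ι → A, (∑ x, ψ (∑ i, a i * f i x)) ^ n =
      (Fintype.card A : R) ^ Fintype.card ι *
        {x : Fin n → X | ∀ i, ∑ l, f i (x l) = 0}.ncard := by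
  classical
  have hexpand (a : ι → A) : (∑ x, ψ (∑ i, a i * f i x)) ^ n =
      ∑ x : Fin n → X, ψ (∑ i, a i * ∑ l, f i (x l)) := by
    rw [Fintype.sum_pow]
    refine sum_congr rfl fun x _ => ?_
    rw [← addChar_map_sum, sum_comm]
    simp only [mul_sum]
  simp_rw [hexpand]
  rw [sum_comm]
  simp_rw [sum_addChar_dotProduct hψ]
  simp [← sum_filter, funext_iff, mul_comm, Set.ncard_eq_toFinset_card']

end Moments

section RadicalPolynomial

variable {F : Type*} [CommRing F] {q d : ℕ}

open Polynomial in
/-- The linearised polynomial `∑ i, (a i ^ q ^ d * x ^ q ^ (d + i) + (a i * x) ^ q ^ (d - i))`.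
Over a finite extension `F` of a field `K` with `q` elements, its roots contain the radical of the
quadratic form `x ↦ Tr (∑ i, a i * x ^ (q ^ i + 1))`; the exponents `q ^ d` clear the inverse
Frobenius maps that occur in the adjoint with respect to the trace form. -/
noncomputable def radicalPolynomial (q : ℕ) (a : Fin (d + 1) → F) : F[X] :=
  ∑ i, (C (a i ^ q ^ d) * X ^ q ^ (d + i) + C (a i ^ q ^ (d - i)) * X ^ q ^ (d - i))

lemma natDegree_radicalPolynomial_le (hq : 0 < q) (a : Fin (d + 1) → F) :
    (radicalPolynomial q a).natDegree ≤ q ^ (2 * d) := by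
  have hmono {e : ℕ} (he : e ≤ 2 * d) : q ^ e ≤ q ^ (2 * d) := Nat.pow_le_pow_right hq he
  exact Polynomial.natDegree_sum_le_of_forall_le _ _ fun i _ =>
    Polynomial.natDegree_add_le_of_degree_le
      ((Polynomial.natDegree_C_mul_X_pow_le _ _).trans (hmono (by omega)))
      ((Polynomial.natDegree_C_mul_X_pow_le _ _).trans (hmono (by omega)))

lemma coeff_radicalPolynomial (hq : 1 < q) (a : Fin (d + 1) → F) (k : Fin (d + 1)) :
    (radicalPolynomial q a).coeff (q ^ (d + (k : ℕ))) =
      (if k = 0 then 2 else 1) * a k ^ q ^ d := by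
  have hinj (m n : ℕ) : q ^ m = q ^ n ↔ m = n := (Nat.pow_right_injective hq).eq_iff
  have hlow (i : Fin (d + 1)) : d + (k : ℕ) = d - i ↔ k = 0 ∧ i = 0 := by
    simp only [Fin.ext_iff, Fin.val_zero]; omega
  simp only [radicalPolynomial, Polynomial.finsetSum_coeff, Polynomial.coeff_add,
    Polynomial.coeff_C_mul, Polynomial.coeff_X_pow, hinj, hlow, add_right_inj, Fin.val_inj]
  split_ifs with hk <;> simp [hk, sum_add_distrib, two_mul]

lemma radicalPolynomial_ne_zero [IsDomain F] (hq : 1 < q) (h2 : (2 : F) ≠ 0)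
    {a : Fin (d + 1) → F} (ha : a ≠ 0) : radicalPolynomial q a ≠ 0 := by
  obtain ⟨k, hk⟩ := Function.ne_iff.mp ha
  intro h
  have hcoeff := coeff_radicalPolynomial hq a k
  rw [h, Polynomial.coeff_zero] at hcoeff
  refine mul_ne_zero ?_ (pow_ne_zero _ hk) hcoeff.symm
  split_ifs
  exacts [h2, one_ne_zero]

end RadicalPolynomial

section WeilSums

lemma isPrimitive_compAddMonoidHom_trace {K M : Type*} (F : Type*) [Field K] [Field F]
    [Algebra K F] [FiniteDimensional K F] [Algebra.IsSeparable K F] [CommMonoid M]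
    {ψ : AddChar K M} (hψ : ψ ≠ 1) :
    (ψ.compAddMonoidHom (Algebra.trace K F).toAddMonoidHom).IsPrimitive := by
  refine .of_ne_one fun h => hψ ?_
  ext t
  obtain ⟨x, rfl⟩ := Algebra.trace_surjective K F t
  exact DFunLike.congr_fun h x

variable (K : Type*) {F : Type*} [Field K] [Fintype K] [Field F] [Algebra K F] {d : ℕ}

local notation "q" => Fintype.card K

/-- The bilinear form `(x, y) ↦ Tr (∑ i, a i * x * y ^ q ^ i)` on `F` over `K`, where
`q = Fintype.card K`, whose quadratic form is `x ↦ Tr (∑ i, a i * x ^ (q ^ i + 1))`. -/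
noncomputable def frobeniusBilin (a : Fin (d + 1) → F) : LinearMap.BilinForm K F :=
  (Algebra.traceForm K F).compl₂
    (∑ i, LinearMap.mulLeft K (a i) ∘ₗ (FiniteField.frobeniusAlgHom K F ^ (i : ℕ)).toLinearMap)

lemma frobeniusBilin_apply (a : Fin (d + 1) → F) (x y : F) :
    frobeniusBilin K a x y = Algebra.trace K F (∑ i, a i * x * y ^ q ^ (i : ℕ)) := by
  simp only [frobeniusBilin, LinearMap.compl₂_apply, Algebra.traceForm_apply, LinearMap.sum_apply,
    LinearMap.comp_apply, LinearMap.mulLeft_apply, AlgHom.toLinearMap_apply, AlgHom.coe_pow,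
    FiniteField.coe_frobeniusAlgHom, pow_iterate, mul_sum]
  congr! 2
  ring

lemma toQuadraticMap_frobeniusBilin_apply (a : Fin (d + 1) → F) (x : F) :
    (frobeniusBilin K a).toQuadraticMap x =
      Algebra.trace K F (∑ i, a i * x ^ (q ^ (i : ℕ) + 1)) := by
  rw [LinearMap.BilinMap.toQuadraticMap_apply, frobeniusBilin_apply]
  congr! 2
  ring

lemma trace_pow_card_pow [Algebra.IsAlgebraic K F] (n : ℕ) (x : F) :
    Algebra.trace K F (x ^ q ^ n) = Algebra.trace K F x := by
  induction n with
  | zero => simp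
  | succ n ih =>
    rw [pow_succ, pow_mul, ← ih]
    exact Algebra.trace_eq_of_algEquiv (FiniteField.frobeniusAlgEquivOfAlgebraic K F) _

lemma pow_card_pow_bijective [Algebra.IsAlgebraic K F] (n : ℕ) :
    Function.Bijective fun x : F => x ^ q ^ n := by
  rw [← FiniteField.coe_frobeniusAlgEquivOfAlgebraic_iterate]
  exact (AlgEquiv.bijective _).iterate n

lemma trace_mul_pow_eq_polarBilin [Algebra.IsAlgebraic K F] (a : Fin (d + 1) → F) (x y : F) :
    Algebra.trace K F ((radicalPolynomial q a).eval x * y ^ q ^ d) =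
      (frobeniusBilin K a).toQuadraticMap.polarBilin x y := by
  rw [QuadraticMap.polarBilin_apply_apply, LinearMap.BilinMap.polar_toQuadraticMap,
    frobeniusBilin_apply, frobeniusBilin_apply, ← map_add, ← sum_add_distrib, radicalPolynomial,
    Polynomial.eval_finsetSum, sum_mul, map_sum, map_sum]
  refine sum_congr rfl fun i _ => ?_
  rw [map_add, add_comm, ← trace_pow_card_pow K (d - i) (a i * x * _),
    ← trace_pow_card_pow K d (a i * y * _), ← map_add]
  have hpow : (y ^ q ^ (i : ℕ)) ^ q ^ (d - i) = y ^ q ^ d := by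
    rw [← pow_mul, ← pow_add, Nat.add_sub_cancel' (by omega)]
  congr 1
  simp only [Polynomial.eval_add, Polynomial.eval_mul, Polynomial.eval_C,
    Polynomial.eval_pow, Polynomial.eval_X, mul_pow, hpow]
  ring

lemma radicalPolynomial_isRoot [Finite F] {a : Fin (d + 1) → F} {x : F}
    (hx : x ∈ (frobeniusBilin K a).toQuadraticMap.radical) : (radicalPolynomial q a).IsRoot x := by
  refine (traceForm_nondegenerate K F).1 _ fun z => ?_
  obtain ⟨y, rfl⟩ := (pow_card_pow_bijective K d).surjective z
  rw [Algebra.traceForm_apply, trace_mul_pow_eq_polarBilin,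
    LinearMap.mem_ker.mp (QuadraticMap.radical_le_ker_polarBilin hx), LinearMap.zero_apply]

lemma finrank_radical_frobeniusBilin_le [Finite F] (hK : ringChar K ≠ 2) {a : Fin (d + 1) → F}
    (ha : a ≠ 0) :
    Module.finrank K (frobeniusBilin K a).toQuadraticMap.radical ≤ 2 * d := by
  classical
  have := Fintype.ofFinite F
  have h2 : (2 : F) ≠ 0 := by
    simpa only [map_ofNat] using (map_ne_zero (algebraMap K F)).mpr (Ring.two_ne_zero hK)
  set N := (frobeniusBilin K a).toQuadraticMap.radical
  have hsub : ({x | x ∈ N} : Finset F).val ⊆ (radicalPolynomial q a).roots := fun x hx => by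
    rw [Polynomial.mem_roots (radicalPolynomial_ne_zero Fintype.one_lt_card h2 ha)]
    exact radicalPolynomial_isRoot K (by simpa using hx)
  have hcard : q ^ Module.finrank K N ≤ q ^ (2 * d) :=
    calc q ^ Module.finrank K N = #{x | x ∈ N} := by
          rw [← Module.card_eq_pow_finrank, Fintype.card_subtype]
      _ ≤ (radicalPolynomial q a).natDegree := Polynomial.card_le_degree_of_subset_roots hsub
      _ ≤ q ^ (2 * d) := natDegree_radicalPolynomial_le Fintype.card_pos a
  exact (Nat.pow_le_pow_iff_right Fintype.one_lt_card).mp hcard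

variable {K} {R : Type*} [CommRing R]

/-- The exponential sum `∑ x, ψ (Tr (∑ i, a i * x ^ (q ^ i + 1)))` over `F`, for an additive
character `ψ` of the subfield `K` with `q` elements. -/
noncomputable def weilSum [Fintype F] (ψ : AddChar K R) (a : Fin (d + 1) → F) : R :=
  ∑ x, ψ (Algebra.trace K F (∑ i, a i * x ^ (q ^ (i : ℕ) + 1)))

/-- The number of nonzero coefficient vectors `a` for which the quadratic form
`x ↦ Tr (∑ i, a i * x ^ (q ^ i + 1))` has `j`-dimensional radical, read off from
`weilSum ψ a ^ 2`. -/
noncomputable def weilSumCount (F : Type*) [Field F] [Fintype F] [Algebra K F]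
    (ψ : AddChar K R) (d j : ℕ) : ℕ :=
  {a : Fin (d + 1) → F |
    a ≠ 0 ∧ weilSum ψ a ^ 2 = (signedCard K : R) ^ (Module.finrank K F + j)}.ncard

variable [Fintype F] [IsDomain R] {ψ : AddChar K R}

lemma exists_weilSum_sq_eq (hK : ringChar K ≠ 2) (hR : ringChar R ≠ 2) (hψ : ψ ≠ 1)
    {a : Fin (d + 1) → F} (ha : a ≠ 0) :
    ∃ j ≤ 2 * d, weilSum ψ a ^ 2 = (signedCard K : R) ^ (Module.finrank K F + j) := by
  refine ⟨_, finrank_radical_frobeniusBilin_le K hK ha, ?_⟩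
  simp only [weilSum, ← toQuadraticMap_frobeniusBilin_apply]
  exact sq_sum_addChar_quadraticForm hK hR (.of_ne_one hψ) _

lemma sum_weilSum_pow (hψ : ψ ≠ 1) (n : ℕ) :
    ∑ a : Fin (d + 1) → F, weilSum ψ a ^ n = (Fintype.card F : R) ^ (d + 1) *
      {x : Fin n → F | ∀ i : Fin (d + 1), ∑ l, x l ^ (q ^ (i : ℕ) + 1) = 0}.ncard := by
  simpa [weilSum] using
    sum_pow_sum_addChar (isPrimitive_compAddMonoidHom_trace F hψ)
      (fun (i : Fin (d + 1)) (x : F) => x ^ (q ^ (i : ℕ) + 1)) n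

lemma sum_weilSum_sq_pow [CharZero R] [DecidableEq F] (hK : ringChar K ≠ 2) (hψ : ψ ≠ 1)
    (k : ℕ) :
    ∑ a : Fin (d + 1) → F with a ≠ 0, (weilSum ψ a ^ 2) ^ k =
      ∑ j ∈ range (2 * d + 1),
        weilSumCount F ψ d j * (signedCard K : R) ^ ((Module.finrank K F + j) * k) := by
  classical
  have hR : ringChar R ≠ 2 := by simp
  let value (j : ℕ) : R := (signedCard K : R) ^ (Module.finrank K F + j)
  have hinj : Function.Injective value := fun i j hij => by
    have hlt : 1 < (signedCard K).natAbs := natAbs_signedCard hK ▸ Fintype.one_lt_card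
    have hpow : signedCard K ^ (Module.finrank K F + i) = signedCard K ^ (Module.finrank K F + j) :=
      Int.cast_injective (α := R) (by push_cast; exact hij)
    exact Nat.add_left_cancel (Int.pow_right_injective hlt hpow)
  have hmaps (a : Fin (d + 1) → F) (ha : a ∈ ({a | a ≠ 0} : Finset _)) :
      weilSum ψ a ^ 2 ∈ (range (2 * d + 1)).image value := by
    obtain ⟨j, hj, h⟩ := exists_weilSum_sq_eq hK hR hψ (mem_filter.mp ha).2
    exact mem_image.mpr ⟨j, mem_range_succ_iff.mpr hj, h.symm⟩
  have hcard (j : ℕ) : weilSumCount F ψ d j =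
      #{a : Fin (d + 1) → F | a ≠ 0 ∧ weilSum ψ a ^ 2 = value j} := by
    simp [weilSumCount, value, Set.ncard_eq_toFinset_card']
  rw [← sum_fiberwise_of_maps_to hmaps, sum_image hinj.injOn]
  refine sum_congr rfl fun j _ => ?_
  rw [sum_congr rfl fun a ha => by rw [(mem_filter.mp ha).2], sum_const, nsmul_eq_mul,
    filter_filter, hcard, pow_mul]

theorem card_pow_mul_ncard_solutions [CharZero R] (hK : ringChar K ≠ 2)
    (hψ : ψ ≠ 1) (d k : ℕ) :
    (Fintype.card F : ℤ) ^ (d + 1) *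
        {x : Fin (2 * k) → F | ∀ i : Fin (d + 1), ∑ l, x l ^ (q ^ (i : ℕ) + 1) = 0}.ncard =
      (Fintype.card F : ℤ) ^ (2 * k) + ∑ j ∈ range (2 * d + 1),
        weilSumCount F ψ d j * signedCard K ^ ((Module.finrank K F + j) * k) := by
  classical
  have hzero : weilSum ψ (0 : Fin (d + 1) → F) = Fintype.card F := by simp [weilSum]
  have hmoment := sum_weilSum_pow (F := F) (d := d) hψ (2 * k)
  rw [← add_sum_erase _ _ (mem_univ 0), hzero, ← filter_ne' univ] at hmoment
  simp only [pow_mul (weilSum ψ _)] at hmoment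
  rw [sum_weilSum_sq_pow hK hψ] at hmoment
  exact_mod_cast hmoment.symm

end WeilSums

section GaloisFieldSums

variable {p m : ℕ}

lemma zetaPow_eq_stdAddChar [NeZero p] (a : ZMod p) : zetaPow p a = ZMod.stdAddChar a := by
  rw [ZMod.stdAddChar_apply, ZMod.toCircle_apply, zetaPow]

lemma expSum_eq_weilSum [Fact p.Prime] [Fintype (GaloisField p m)] (a : Fin 3 → GaloisField p m) :
    expSum p m (a 0) (a 1) (a 2) = weilSum (ZMod.stdAddChar (N := p)) a := by
  rw [expSum, weilSum]
  refine sum_congr (by ext; simp) fun x _ => ?_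
  simp [zetaPow_eq_stdAddChar, Fin.sum_univ_three, ZMod.card]

lemma nval_sq (hm : Even m) {ε : ℤ} (hε : ε ^ 2 = 1) (j : ℕ) :
    nval p m ε j ^ 2 = (-p : ℂ) ^ (m + j) := by
  have hsqrt : ((√((p : ℝ) ^ (m + j)) : ℝ) : ℂ) ^ 2 = (p : ℂ) ^ (m + j) := by
    rw [← ofReal_pow, Real.sq_sqrt (by positivity)]
    push_cast
    rfl
  have hε' : (ε : ℂ) ^ 2 = 1 := by exact_mod_cast hε
  rw [nval, neg_pow (p : ℂ), pow_add (-1 : ℂ), hm.neg_one_pow, one_mul]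
  split_ifs with hj
  · rw [(Nat.even_iff.mpr hj).neg_one_pow, mul_pow, hε', hsqrt]
  · rw [(Nat.not_even_iff_odd.mp (by rwa [Nat.even_iff])).neg_one_pow, mul_pow, mul_pow, hε',
      hsqrt, I_sq, one_mul]

lemma nval_neg (ε : ℤ) (j : ℕ) : nval p m (-ε) j = -nval p m ε j := by
  simp only [nval, Int.cast_neg, neg_mul, ← neg_ite]

lemma signedCard_zmod [Fact p.Prime] (hp : p % 4 = 3) : signedCard (ZMod p) = -p := by
  rw [signedCard, ZMod.card, ZMod.χ₄_nat_three_mod_four hp, neg_one_mul]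

lemma ringChar_zmod_ne_two (hp : p % 4 = 3) : ringChar (ZMod p) ≠ 2 := by
  rw [ZMod.ringChar_zmod_n]
  omega

lemma stdAddChar_ne_one (p : ℕ) [Fact p.Prime] : ZMod.stdAddChar (N := p) ≠ 1 := by
  simpa using ZMod.isPrimitive_stdAddChar p one_ne_zero

/-- Triples as vectors indexed by `Fin 3`. -/
def tripleEquiv (F : Type*) : F × F × F ≃ (Fin 3 → F) where
  toFun t := ![t.1, t.2.1, t.2.2]
  invFun x := (x 0, x 1, x 2)
  left_inv _ := rfl
  right_inv x := by ext i; fin_cases i <;> rfl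

/-- Six-tuples as vectors indexed by `Fin 6`. -/
def sextupleEquiv (F : Type*) : F × F × F × F × F × F ≃ (Fin 6 → F) where
  toFun t := ![t.1, t.2.1, t.2.2.1, t.2.2.2.1, t.2.2.2.2.1, t.2.2.2.2.2]
  invFun x := (x 0, x 1, x 2, x 3, x 4, x 5)
  left_inv _ := rfl
  right_inv x := by ext i; fin_cases i <;> rfl

lemma ncard_sextuples {F : Type*} [Semiring F] (a b c : ℕ) :
    {(x, y, z, w, u, v) : F × F × F × F × F × F |
        x ^ a + y ^ a + z ^ a + w ^ a + u ^ a + v ^ a = 0 ∧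
        x ^ b + y ^ b + z ^ b + w ^ b + u ^ b + v ^ b = 0 ∧
        x ^ c + y ^ c + z ^ c + w ^ c + u ^ c + v ^ c = 0}.ncard =
      {x : Fin 6 → F | ∑ l, x l ^ a = 0 ∧ ∑ l, x l ^ b = 0 ∧ ∑ l, x l ^ c = 0}.ncard := by
  rw [← Set.ncard_image_of_injective _ (sextupleEquiv F).injective, Equiv.image_eq_preimage_symm]
  congr 1
  ext x
  simp only [Set.mem_preimage, Set.mem_ofPred_eq, Fin.sum_univ_six]
  rfl

lemma nn_eq_ncard [Fact p.Prime] [Fintype (GaloisField p m)] (ε : ℤ) (j : ℕ) :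
    nn p m ε j =
      {a : Fin 3 → GaloisField p m |
        a ≠ 0 ∧ weilSum (ZMod.stdAddChar (N := p)) a = nval p m ε j}.ncard := by
  rw [nn, ← Set.ncard_image_of_injective _ (tripleEquiv _).injective, Equiv.image_eq_preimage_symm]
  congr 1
  ext a
  rw [Set.mem_preimage, Set.mem_ofPred_eq, Set.mem_ofPred_eq, ← expSum_eq_weilSum]
  exact and_congr_left' ((tripleEquiv _).symm.injective.ne_iff (y := 0))

lemma nn_one_add_nn_neg_one [Fact p.Prime] [Fintype (GaloisField p m)] (hp : p % 4 = 3)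
    (hm : Even m) (hm0 : m ≠ 0) (j : ℕ) :
    nn p m 1 j + nn p m (-1) j = weilSumCount (GaloisField p m) (ZMod.stdAddChar (N := p)) 2 j := by
  have hsq : nval p m 1 j ^ 2 = (-p : ℂ) ^ (m + j) := nval_sq hm (one_pow 2) j
  have hne : nval p m 1 j ≠ 0 := fun h => by
    have hp0 : (p : ℂ) ≠ 0 := NeZero.ne _
    simp [h, hp0, eq_comm] at hsq
  rw [nn_eq_ncard, nn_eq_ncard, nval_neg, ← Set.ncard_union_eq, weilSumCount, signedCard_zmod hp,
    GaloisField.finrank p hm0]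
  · congr 1
    ext a
    simp [← hsq, sq_eq_sq_iff_eq_or_eq_neg, and_or_left]
  · exact Set.disjoint_left.mpr fun a ha hb => hne (self_eq_neg.mp (ha.2.symm.trans hb.2))

end GaloisFieldSums

theorem count_six_tuples_general (p m : ℕ) [Fact p.Prime] (hp : p % 4 = 3) (hme : Even m)
    (hm0 : m ≠ 0) :
    ({(x, y, z, w, u, v) : GaloisField p m × GaloisField p m × GaloisField p m ×
        GaloisField p m × GaloisField p m × GaloisField p m |
        x ^ 2 + y ^ 2 + z ^ 2 + w ^ 2 + u ^ 2 + v ^ 2 = 0 ∧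
        x ^ (p + 1) + y ^ (p + 1) + z ^ (p + 1) + w ^ (p + 1) + u ^ (p + 1) + v ^ (p + 1) = 0 ∧
        x ^ (p ^ 2 + 1) + y ^ (p ^ 2 + 1) + z ^ (p ^ 2 + 1) + w ^ (p ^ 2 + 1) +
          u ^ (p ^ 2 + 1) + v ^ (p ^ 2 + 1) = 0}.ncard : ℤ) =
      (nn p m 1 0 : ℤ) + nn p m (-1) 0 +
        (p : ℤ) ^ 6 * ((nn p m 1 2 : ℤ) + nn p m (-1) 2) +
        (p : ℤ) ^ 12 * ((nn p m 1 4 : ℤ) + nn p m (-1) 4) -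
        (p : ℤ) ^ 3 * ((nn p m 1 1 : ℤ) + nn p m (-1) 1) -
        (p : ℤ) ^ 9 * ((nn p m 1 3 : ℤ) + nn p m (-1) 3) + (p : ℤ) ^ (3 * m) := by
  let _ : Fintype (GaloisField p m) := Fintype.ofFinite _
  have hcard : (Fintype.card (GaloisField p m) : ℤ) = p ^ m := by
    exact_mod_cast Nat.card_eq_fintype_card.symm.trans (GaloisField.card p m hm0)
  have hpow (j : ℕ) : (-p : ℤ) ^ ((m + j) * 3) = (p ^ m) ^ 3 * (-p : ℤ) ^ (j * 3) := by
    rw [add_mul, pow_add, (hme.mul_right 3).neg_pow, pow_mul]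
  have hset : {x : Fin 6 → GaloisField p m |
      ∑ l, x l ^ 2 = 0 ∧ ∑ l, x l ^ (p + 1) = 0 ∧ ∑ l, x l ^ (p ^ 2 + 1) = 0} =
      {x | ∀ i : Fin (2 + 1), ∑ l, x l ^ (p ^ (i : ℕ) + 1) = 0} := by
    simp [Fin.forall_fin_succ]
  have hmoment := card_pow_mul_ncard_solutions (F := GaloisField p m) (ringChar_zmod_ne_two hp)
    (stdAddChar_ne_one p) 2 3
  simp only [← nn_one_add_nn_neg_one hp hme hm0, hcard, signedCard_zmod hp, ZMod.card, hpow,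
    GaloisField.finrank p hm0, sum_range_succ, sum_range_zero, Nat.cast_add] at hmoment
  rw [ncard_sextuples, hset]
  have hp0 : ((p : ℤ) ^ m) ^ 3 ≠ 0 := by simp [NeZero.ne p]
  apply mul_left_cancel₀ hp0
  linear_combination hmoment

theorem count_six_tuples (m : ℕ) (hme : Even m) (hm6 : 6 ≤ m) :
    letI : Fact (Nat.Prime 3) := ⟨by norm_num⟩
    ({(x, y, z, w, u, v) : GaloisField 3 m × GaloisField 3 m × GaloisField 3 m ×
        GaloisField 3 m × GaloisField 3 m × GaloisField 3 m |
        x ^ 2 + y ^ 2 + z ^ 2 + w ^ 2 + u ^ 2 + v ^ 2 = 0 ∧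
        x ^ 4 + y ^ 4 + z ^ 4 + w ^ 4 + u ^ 4 + v ^ 4 = 0 ∧
        x ^ 10 + y ^ 10 + z ^ 10 + w ^ 10 + u ^ 10 + v ^ 10 = 0}.ncard : ℤ) =
      (nn 3 m 1 0 : ℤ) + nn 3 m (-1) 0 +
        (3 : ℤ) ^ 6 * ((nn 3 m 1 2 : ℤ) + nn 3 m (-1) 2) +
        (3 : ℤ) ^ 12 * ((nn 3 m 1 4 : ℤ) + nn 3 m (-1) 4) -
        (3 : ℤ) ^ 3 * ((nn 3 m 1 1 : ℤ) + nn 3 m (-1) 1) -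
        (3 : ℤ) ^ 9 * ((nn 3 m 1 3 : ℤ) + nn 3 m (-1) 3) + (3 : ℤ) ^ (3 * m) := by
  exact_mod_cast count_six_tuples_general 3 m rfl hme (by omega)
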